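/- arXiv:1101.0532 — 2 statements merged into one kernel-verified Lean document; each statement's English description precedes it below -/
import Mathlib

section
/- Let A be a finitely generated additive commutative group. Define the following moves on vectors V : Fin g ⊕ Fin g → A (with g ranging over ℕ) whose entries generate A: (Λ₁) replace V by the vector i ↦ ∑_k (P i k) • V k for some P in the symplectic group Sp(Fin g, ℤ); (Λ₂) replace V : Fin g ⊕ Fin g → A by the vector V' : Fin (g+1) ⊕ Fin (g+1) → A with V'(Sum.inl (Fin.castSucc j)) = V(Sum.inl j) and V'(Sum.inr (Fin.castSucc j)) = V(Sum.inr j) for all j, V'(Sum.inl (Fin.last g)) = 0, and V'(Sum.inr (Fin.last g)) = y, for some y ∈ A. Let ≈ be the equivalence relation generated by these moves. Then two generating vectors V₁ : Fin g₁ ⊕ Fin g₁ → A and V₂ : Fin g₂ ⊕ Fin g₂ → A satisfy V₁ ≈ V₂ if and only if their wedge invariants in ⋀²_ℤ A coincide: ∑_j V₁(Sum.inl j) ∧ V₁(Sum.inr j) = ∑_j V₂(Sum.inl j) ∧ V₂(Sum.inr j). (This is the algebraic content of Proposition 30: the quotient of the set of full colouring vectors by the Λ₁- and Λ₂-moves is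 in bijection with A ∧ A via φ.) -/
open Matrix

/-- The wedge `v ∧ w` of two elements of an additive commutative group `A` (regarded as a
`ℤ`-module), as an element of the second exterior power `⋀²_ℤ A`. -/
noncomputable def wedge {A : Type*} [AddCommGroup A] (v w : A) : ⋀[ℤ]^2 A :=
  ⟨ExteriorAlgebra.ιMulti ℤ 2 ![v, w],
    ExteriorAlgebra.ιMulti_range ℤ 2 (Set.mem_range_self ![v, w])⟩

/-- The sigma type of pairs `(g, V)` of a natural number `g` and a generating colouring
vector `V : Fin g ⊕ Fin g → A`. -/
def GenVec (A : Type*) [AddCommGroup A] : Type _ :=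
  Σ g : ℕ, {V : Fin g ⊕ Fin g → A // AddSubgroup.closure (Set.range V) = ⊤}

/-- The stabilization of a colouring vector used in the `Λ₂`-move: the two new entries are
`0` (in the `inl` half) and `y` (in the `inr` half). -/
def stabilize {A : Type*} [AddCommGroup A] {g : ℕ} (V : Fin g ⊕ Fin g → A) (y : A) :
    Fin (g + 1) ⊕ Fin (g + 1) → A :=
  Sum.elim (Fin.snoc (fun j => V (Sum.inl j)) 0) (Fin.snoc (fun j => V (Sum.inr j)) y)

/-- The `Λ₁`- and `Λ₂`-moves on generating colouring vectors. -/
inductive LambdaMove {A : Type*} [AddCommGroup A] : GenVec A → GenVec A → Prop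
  | lambda1 {g : ℕ} (V : Fin g ⊕ Fin g → A)
      (hV : AddSubgroup.closure (Set.range V) = ⊤)
      (P : Matrix (Fin g ⊕ Fin g) (Fin g ⊕ Fin g) ℤ)
      (hP : P ∈ Matrix.symplecticGroup (Fin g) ℤ)
      (hW : AddSubgroup.closure (Set.range fun i => ∑ k, P i k • V k) = ⊤) :
      LambdaMove ⟨g, V, hV⟩ ⟨g, fun i => ∑ k, P i k • V k, hW⟩
  | lambda2 {g : ℕ} (V : Fin g ⊕ Fin g → A)
      (hV : AddSubgroup.closure (Set.range V) = ⊤) (y : A)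
      (hW : AddSubgroup.closure (Set.range (stabilize V y)) = ⊤) :
      LambdaMove ⟨g, V, hV⟩ ⟨g + 1, stabilize V y, hW⟩

section LambdaAux

open Relation

variable {A : Type*} [AddCommGroup A]

/-! ### Invariance of the wedge sum -/

theorem wedge_eq (v w : A) : wedge v w = exteriorPower.ιMulti ℤ 2 ![v, w] := rfl

theorem update_two_zero (a b c : A) : Function.update ![a, b] 0 c = ![c, b] := by
  ext i; fin_cases i <;> rfl

theorem update_two_one (a b c : A) : Function.update ![a, b] 1 c = ![a, c] := by
  ext i; fin_cases i <;> rfl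

theorem wedge_add_left (u v w : A) : wedge (u + v) w = wedge u w + wedge v w := by
  have := (exteriorPower.ιMulti ℤ 2 (M := A)).map_update_add ![0, w] 0 u v
  rwa [update_two_zero, update_two_zero, update_two_zero] at this

theorem wedge_add_right (u v w : A) : wedge u (v + w) = wedge u v + wedge u w := by
  have := (exteriorPower.ιMulti ℤ 2 (M := A)).map_update_add ![u, 0] 1 v w
  rwa [update_two_one, update_two_one, update_two_one] at this

theorem wedge_self (u : A) : wedge u u = 0 :=
  (exteriorPower.ιMulti ℤ 2 (M := A)).map_eq_zero_of_eq ![u, u] (i := 0) (j := 1) rfl (by decide)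

theorem wedge_swap (u v : A) : wedge u v = - wedge v u := by
  have h := wedge_self (u + v)
  rw [wedge_add_left, wedge_add_right, wedge_add_right, wedge_self, wedge_self] at h
  rw [eq_neg_iff_add_eq_zero]
  simpa using h

/-- The wedge as a biadditive map. -/
noncomputable def wedgeHom : A →+ A →+ ⋀[ℤ]^2 A :=
  AddMonoidHom.mk' (fun u => AddMonoidHom.mk' (wedge u) (wedge_add_right u))
    (fun u v => by ext1 w; exact wedge_add_left u v w)

theorem wedgeHom_apply (u v : A) : wedgeHom u v = wedge u v := rfl

theorem wedge_sum_sum {ι : Type*} [Fintype ι] (a b : ι → ℤ) (V : ι → A) :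
    wedge (∑ k, a k • V k) (∑ l, b l • V l) = ∑ k, ∑ l, (a k * b l) • wedge (V k) (V l) := by
  rw [← wedgeHom_apply]
  simp only [map_sum, AddMonoidHom.finsetSum_apply, map_zsmul, AddMonoidHom.zsmul_apply, 
    wedgeHom_apply, smul_smul, Finset.smul_sum]
  rw [Finset.sum_comm]
  simp only [mul_comm]

theorem symm_sum_zero {ι : Type*} [Fintype ι] (S : ι → ι → ℤ) (hS : ∀ k l, S k l = S l k)
    (V : ι → A) : ∑ k, ∑ l, S k l • wedge (V k) (V l) = 0 := by
  rw [← Fintype.sum_prod_type']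
  refine Finset.sum_ninvolution (fun p : ι × ι => (p.2, p.1)) ?_ ?_ ?_ ?_
  · rintro ⟨k, l⟩
    simp only
    rw [hS l k, wedge_swap (V l), smul_neg, add_neg_cancel]
  · rintro ⟨k, l⟩ h1 h2
    simp only [Prod.mk.injEq] at h2
    obtain ⟨rfl, -⟩ := h2
    exact h1 (by simp [wedge_self])
  · intro; simp
  · intro; simp

theorem wedge_sum_coeff {g : ℕ} (P : Matrix (Fin g ⊕ Fin g) (Fin g ⊕ Fin g) ℤ)
    (V : Fin g ⊕ Fin g → A) :
    ∑ j : Fin g, wedge (∑ k, P (Sum.inl j) k • V k) (∑ k, P (Sum.inr j) k • V k) =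
      ∑ k, ∑ l, (∑ j, P (Sum.inl j) k * P (Sum.inr j) l) • wedge (V k) (V l) := by
  simp only [wedge_sum_sum, Finset.sum_smul]
  rw [Finset.sum_comm]
  refine Finset.sum_congr rfl fun k _ => ?_
  rw [Finset.sum_comm]

theorem transpose_J_entry {g : ℕ} (P : Matrix (Fin g ⊕ Fin g) (Fin g ⊕ Fin g) ℤ) (k l) :
    (Pᵀ * Matrix.J (Fin g) ℤ * P) k l =
      (∑ j, P (Sum.inr j) k * P (Sum.inl j) l) - ∑ j, P (Sum.inl j) k * P (Sum.inr j) l := by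
  simp [Matrix.mul_apply, Matrix.J, Fintype.sum_sum_type, Matrix.fromBlocks, Matrix.one_apply]
  ring

theorem wedge_sum_symplectic {g : ℕ} (P : Matrix (Fin g ⊕ Fin g) (Fin g ⊕ Fin g) ℤ)
    (hP : P ∈ Matrix.symplecticGroup (Fin g) ℤ) (V : Fin g ⊕ Fin g → A) :
    ∑ j : Fin g, wedge (∑ k, P (Sum.inl j) k • V k) (∑ k, P (Sum.inr j) k • V k) =
      ∑ j : Fin g, wedge (V (Sum.inl j)) (V (Sum.inr j)) := by
  have h1 : ∑ j : Fin g, wedge (V (Sum.inl j)) (V (Sum.inr j)) =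
      ∑ j : Fin g, wedge (∑ k, (1 : Matrix (Fin g ⊕ Fin g) (Fin g ⊕ Fin g) ℤ) (Sum.inl j) k • V k)
        (∑ k, (1 : Matrix (Fin g ⊕ Fin g) (Fin g ⊕ Fin g) ℤ) (Sum.inr j) k • V k) := by
    refine Finset.sum_congr rfl fun j _ => ?_
    simp [Matrix.one_apply]
  rw [h1, wedge_sum_coeff, wedge_sum_coeff, ← sub_eq_zero]
  simp only [← Finset.sum_sub_distrib, ← sub_smul]
  apply symm_sum_zero
  intro k l
  have h2 := transpose_J_entry P k l
  have h3 := transpose_J_entry (1 : Matrix (Fin g ⊕ Fin g) (Fin g ⊕ Fin g) ℤ) k l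
  rw [SymplecticGroup.mem_iff'.1 hP] at h2
  rw [Matrix.transpose_one, one_mul, mul_one] at h3
  simp only [mul_comm (P (Sum.inl _) l), mul_comm ((1 : Matrix (Fin g ⊕ Fin g) (Fin g ⊕ Fin g) ℤ) (Sum.inl _) l), Finset.sum_sub_distrib]
  linarith

theorem wedge_sum_stabilize {g : ℕ} (V : Fin g ⊕ Fin g → A) (y : A) :
    ∑ j, wedge (stabilize V y (Sum.inl j)) (stabilize V y (Sum.inr j)) =
      ∑ j : Fin g, wedge (V (Sum.inl j)) (V (Sum.inr j)) := by
  rw [Fin.sum_univ_castSucc]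
  simp only [stabilize, Sum.elim_inl, Sum.elim_inr, Fin.snoc_castSucc, Fin.snoc_last]
  have : wedge 0 y = 0 := by rw [← wedgeHom_apply]; simp
  simp [this]

/-- The wedge invariant on generating vectors. -/
noncomputable def wedgeInv (X : GenVec A) : ⋀[ℤ]^2 A :=
  ∑ j : Fin X.1, wedge (X.2.1 (Sum.inl j)) (X.2.1 (Sum.inr j))

theorem wedgeInv_eq_of_eqvGen {X Y : GenVec A} (h : EqvGen LambdaMove X Y) :
    wedgeInv X = wedgeInv Y := by
  induction h with
  | rel X Y h =>
    cases h with
    | lambda1 V hV P hP hW => exact (wedge_sum_symplectic P hP V).symm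
    | lambda2 V hV y hW => exact (wedge_sum_stabilize V y).symm
  | refl => rfl
  | symm _ _ _ ih => exact ih.symm
  | trans _ _ _ _ _ ih1 ih2 => exact ih1.trans ih2

/-! ### Multisets of pairs -/

/-- The entries of a multiset of pairs generate. -/
def GenM (k : Multiset (A × A)) : Prop :=
  AddSubgroup.closure {x : A | ∃ p ∈ k, x = p.1 ∨ x = p.2} = ⊤

theorem GenM.mono {k l : Multiset (A × A)} (h : GenM k) (hkl : k ≤ l) : GenM l := by
  unfold GenM at *
  rw [eq_top_iff, ← h]
  apply AddSubgroup.closure_mono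
  rintro x ⟨p, hp, hx⟩
  exact ⟨p, Multiset.mem_of_le hkl hp, hx⟩

/-- The vector attached to a family of pairs. -/
def vecOf {n : ℕ} (f : Fin n → A × A) : Fin n ⊕ Fin n → A :=
  Sum.elim (fun j => (f j).1) (fun j => (f j).2)

/-- The multiset of pairs of a vector. -/
def pairs {n : ℕ} (V : Fin n ⊕ Fin n → A) : Multiset (A × A) :=
  Finset.univ.val.map fun j => (V (Sum.inl j), V (Sum.inr j))

theorem genM_pairs {n : ℕ} (V : Fin n ⊕ Fin n → A) :
    AddSubgroup.closure (Set.range V) = ⊤ ↔ GenM (pairs V) := by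
  unfold GenM
  have : Set.range V = {x : A | ∃ p ∈ pairs V, x = p.1 ∨ x = p.2} := by
    ext x
    simp only [pairs, Set.mem_range, Sum.exists, Set.mem_ofPred_eq, Multiset.mem_map]
    constructor
    · rintro (⟨j, rfl⟩ | ⟨j, rfl⟩)
      · exact ⟨_, ⟨j, by simp, rfl⟩, Or.inl rfl⟩
      · exact ⟨_, ⟨j, by simp, rfl⟩, Or.inr rfl⟩
    · rintro ⟨p, ⟨j, -, rfl⟩, rfl | rfl⟩
      · exact Or.inl ⟨j, rfl⟩
      · exact Or.inr ⟨j, rfl⟩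
  rw [this]

theorem pairs_vecOf {A : Type*} {n : ℕ} (f : Fin n → A × A) :
    pairs (vecOf f) = Finset.univ.val.map f := rfl

theorem pairs_vecOf_cons {n : ℕ} (p : A × A) (f : Fin n → A × A) :
    pairs (vecOf (Fin.cons p f : Fin (n + 1) → A × A)) = p ::ₘ pairs (vecOf f) := by
  rw [pairs_vecOf, pairs_vecOf, Fin.univ_val_map, Fin.univ_val_map, List.ofFn_succ]
  simp

theorem pairs_stabilize {n : ℕ} (V : Fin n ⊕ Fin n → A) (y : A) :
    pairs (stabilize V y) = (0, y) ::ₘ pairs V := by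
  unfold pairs
  rw [Fin.univ_val_map, Fin.univ_val_map, List.ofFn_succ_last]
  simp only [stabilize, Sum.elim_inl, Sum.elim_inr, Fin.snoc_castSucc, Fin.snoc_last]
  rw [← Multiset.coe_add, add_comm]
  rfl

theorem exists_rep (k : Multiset (A × A)) : ∃ (n : ℕ) (f : Fin n → A × A), pairs (vecOf f) = k := by
  induction k using Quotient.inductionOn with
  | h l => 
    refine ⟨l.length, l.get, ?_⟩
    rw [pairs_vecOf, Fin.univ_val_map]
    simp

/-- Move by a symplectic matrix. -/
theorem eqv_symplectic {n : ℕ} (V W : Fin n ⊕ Fin n → A) (hV hW)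
    (P : Matrix (Fin n ⊕ Fin n) (Fin n ⊕ Fin n) ℤ) (hP : P ∈ Matrix.symplecticGroup (Fin n) ℤ)
    (h : ∀ i, W i = ∑ k, P i k • V k) :
    EqvGen LambdaMove (⟨n, V, hV⟩ : GenVec A) ⟨n, W, hW⟩ := by
  obtain rfl : W = fun i => ∑ k, P i k • V k := funext h
  exact EqvGen.rel _ _ (LambdaMove.lambda1 V hV P hP hW)

theorem exists_equiv_of_map_eq {α : Type*} {n m : ℕ} (f : Fin n → α) (g : Fin m → α)
    (h : Finset.univ.val.map f = Finset.univ.val.map g) : ∃ e : Fin n ≃ Fin m, ∀ i, g (e i) = f i := by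
  classical
  have key : ∀ c, Nonempty ({a // f a = c} ≃ {b // g b = c}) := by
    intro c
    refine ⟨Fintype.equivOfCardEq ?_⟩
    have := congrArg (Multiset.count c) h
    rw [Multiset.count_map, Multiset.count_map] at this
    rw [Fintype.card_subtype, Fintype.card_subtype, Finset.card_def, Finset.card_def]
    simpa [eq_comm] using this
  exact ⟨Equiv.ofFiberEquiv fun c => (key c).some, fun i => Equiv.ofFiberEquiv_map _ i⟩

theorem eqv_of_pairs_eq {n m : ℕ} (V : Fin n ⊕ Fin n → A) (W : Fin m ⊕ Fin m → A) (hV hW)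
    (h : pairs V = pairs W) :
    EqvGen LambdaMove (⟨n, V, hV⟩ : GenVec A) ⟨m, W, hW⟩ := by
  obtain ⟨e, he⟩ := exists_equiv_of_map_eq _ _ h
  obtain rfl : n = m := by simpa using Fintype.card_congr e
  simp only [Prod.mk.injEq] at he
  apply EqvGen.symm
  apply eqv_symplectic _ _ _ _
    (Matrix.fromBlocks (e.toPEquiv.toMatrix) 0 0 (e.toPEquiv.toMatrix))
  · rw [SymplecticGroup.fromBlocks_mem_iff]
    refine ⟨by simp, by simp, ?_⟩
    rw [← PEquiv.toMatrix_symm, ← PEquiv.toMatrix_trans, ← Equiv.toPEquiv_symm,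
      ← Equiv.toPEquiv_trans]
    simp
  · rintro (i | i)
    · simp [Fintype.sum_sum_type, PEquiv.toMatrix_apply, he]
    · simp [Fintype.sum_sum_type, PEquiv.toMatrix_apply, he]

/-- The relation on multisets of pairs: equivalent after adding any generating multiset. -/
def PairRel (m₁ m₂ : Multiset (A × A)) : Prop :=
  ∀ k, GenM k → ∀ (n₁ n₂ : ℕ) (V : Fin n₁ ⊕ Fin n₁ → A) (W : Fin n₂ ⊕ Fin n₂ → A) (hV hW),
    pairs V = m₁ + k → pairs W = m₂ + k →
    EqvGen LambdaMove (⟨n₁, V, hV⟩ : GenVec A) ⟨n₂, W, hW⟩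

theorem exists_vec (m k : Multiset (A × A)) (hk : GenM k) :
    ∃ (n : ℕ) (V : Fin n ⊕ Fin n → A), AddSubgroup.closure (Set.range V) = ⊤ ∧ pairs V = m + k := by
  obtain ⟨n, f, hf⟩ := exists_rep (m + k)
  refine ⟨n, vecOf f, ?_, hf⟩
  rw [genM_pairs, hf]
  exact hk.mono (Multiset.le_add_left _ _)

theorem PairRel.trans' {a b c : Multiset (A × A)} (h : PairRel a b) (h' : PairRel b c) :
    PairRel a c := by
  intro k hk n₁ n₂ V W hV hW h1 h2
  obtain ⟨n, U, hU, hU'⟩ := exists_vec b k hk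
  exact (h k hk _ _ V U hV hU h1 hU').trans _ _ _ (h' k hk _ _ U W hU hW hU' h2)

theorem PairRel.add_right {a b : Multiset (A × A)} (h : PairRel a b) (c) :
    PairRel (a + c) (b + c) := by
  intro k hk n₁ n₂ V W hV hW h1 h2
  exact h (c + k) (hk.mono (Multiset.le_add_left _ _)) _ _ V W hV hW
    (by rw [h1, add_assoc]) (by rw [h2, add_assoc])

/-- The congruence. -/
def pairCon (A : Type*) [AddCommGroup A] : AddCon (Multiset (A × A)) where
  r := PairRel
  iseqv := ⟨fun a k hk n₁ n₂ V W hV hW h1 h2 => eqv_of_pairs_eq V W hV hW (h1.trans h2.symm),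
    fun h k hk n₁ n₂ V W hV hW h1 h2 => (h k hk _ _ W V hW hV h2 h1).symm _ _,
    fun h h' => h.trans' h'⟩
  add' := by
    intro w x y z h h'
    refine (h.add_right y).trans' ?_
    rw [add_comm x y, add_comm x z]
    exact h'.add_right x

theorem PairRel.of_rep {a b : Multiset (A × A)}
    (h : ∀ (n : ℕ) (f : Fin n → A × A), GenM (pairs (vecOf f)) →
      ∃ (n₁ n₂ : ℕ) (V : Fin n₁ ⊕ Fin n₁ → A) (W : Fin n₂ ⊕ Fin n₂ → A),
        pairs V = a + pairs (vecOf f) ∧ pairs W = b + pairs (vecOf f) ∧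
        ∀ (hV hW), EqvGen LambdaMove (⟨n₁, V, hV⟩ : GenVec A) ⟨n₂, W, hW⟩) :
    PairRel a b := by
  intro k hk n₁ n₂ V W hV hW h1 h2
  obtain ⟨n, f, rfl⟩ := exists_rep k
  obtain ⟨p, q, V', W', hV', hW', e⟩ := h n f hk
  have gV : AddSubgroup.closure (Set.range V') = ⊤ := by
    rw [genM_pairs, hV']; exact hk.mono (Multiset.le_add_left _ _)
  have gW : AddSubgroup.closure (Set.range W') = ⊤ := by
    rw [genM_pairs, hW']; exact hk.mono (Multiset.le_add_left _ _)
  refine (eqv_of_pairs_eq V V' hV gV (h1.trans hV'.symm)).trans _ _ _ ?_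
  exact (e gV gW).trans _ _ _ (eqv_of_pairs_eq W' W gW hW (hW'.trans h2.symm))

theorem rel_zero (y : A) : PairRel {((0 : A), y)} 0 := by
  apply PairRel.of_rep
  intro n f hf
  refine ⟨_, _, stabilize (vecOf f) y, vecOf f, ?_, by simp, ?_⟩
  · rw [pairs_stabilize]; simp
  · intro hV hW
    exact (EqvGen.rel _ _ (LambdaMove.lambda2 _ hW y hV)).symm _ _

theorem rel_one {a b a' b' : A} (p q r s : ℤ) (hdet : p * s - q * r = 1)
    (ha : a' = p • a + q • b) (hb : b' = r • a + s • b) :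
    PairRel {(a, b)} {(a', b')} := by
  apply PairRel.of_rep
  intro n f hf
  refine ⟨_, _, vecOf (Fin.cons (a, b) f : Fin (n + 1) → A × A),
    vecOf (Fin.cons (a', b') f : Fin (n + 1) → A × A), ?_, ?_, ?_⟩
  · rw [pairs_vecOf_cons]; simp
  · rw [pairs_vecOf_cons]; simp
  · intro hV hW
    apply eqv_symplectic _ _ _ _ (Matrix.fromBlocks
      (Matrix.diagonal (Fin.cons p fun _ => 1)) (Matrix.diagonal (Fin.cons q fun _ => 0))
      (Matrix.diagonal (Fin.cons r fun _ => 0)) (Matrix.diagonal (Fin.cons s fun _ => 1)))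
    · rw [SymplecticGroup.fromBlocks_mem_iff]
      simp only [Matrix.diagonal_transpose, Matrix.diagonal_mul_diagonal, Matrix.diagonal_sub]
      refine ⟨by simp only [mul_comm], by simp only [mul_comm], ?_⟩
      rw [← Matrix.diagonal_one]
      congr 1
      funext i
      refine Fin.cases ?_ (fun i => ?_) i
      · simp; linarith
      · simp
    · rintro (i | i)
      · refine Fin.cases ?_ (fun i => ?_) i <;>
        simp [Fintype.sum_sum_type, vecOf, Matrix.diagonal_apply, ha]
      · refine Fin.cases ?_ (fun i => ?_) i <;>
        simp [Fintype.sum_sum_type, vecOf, Matrix.diagonal_apply, hb]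

theorem rel_add (a b c : A) : PairRel {(a, b), (c, b)} {(a + c, b), (c, 0)} := by
  apply PairRel.of_rep
  intro n f hf
  refine ⟨_, _, vecOf (Fin.cons (a, b) (Fin.cons (c, b) f : Fin (n + 1) → A × A) : Fin (n + 2) → _),
    vecOf (Fin.cons (a + c, b) (Fin.cons (c, 0) f : Fin (n + 1) → A × A) : Fin (n + 2) → _),
    ?_, ?_, ?_⟩
  · rw [pairs_vecOf_cons, pairs_vecOf_cons]; simp
  · rw [pairs_vecOf_cons, pairs_vecOf_cons]; simp
  · intro hV hW
    apply eqv_symplectic _ _ _ _ (Matrix.fromBlocks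
      (1 + Matrix.single 0 (Fin.succ 0) 1) 0 0 (1 - Matrix.single (Fin.succ 0) 0 1))
    · rw [SymplecticGroup.fromBlocks_mem_iff]
      refine ⟨by simp, by simp, ?_⟩
      simp [mul_sub, add_mul]
    · rintro (i | i)
      · refine Fin.cases ?_ (fun i => Fin.cases ?_ (fun i => ?_) i) i <;>
        simp [Fintype.sum_sum_type, vecOf, Matrix.one_apply, Matrix.single_apply, add_smul,
          Finset.sum_add_distrib, ite_and, -Fin.succ_zero_eq_one, -Fin.succ_zero_eq_one', (Fin.succ_ne_zero _).symm]
      · refine Fin.cases ?_ (fun i => Fin.cases ?_ (fun i => ?_) i) i <;>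
        simp [Fintype.sum_sum_type, vecOf, Matrix.one_apply, Matrix.single_apply, sub_smul,
          Finset.sum_sub_distrib, ite_and, -Fin.succ_zero_eq_one, -Fin.succ_zero_eq_one', (Fin.succ_ne_zero _).symm]

/-! ### The quotient group -/

/-- The quotient monoid. -/
abbrev PairQ (A : Type*) [AddCommGroup A] : Type _ := (pairCon A).Quotient

/-- The class of a pair. -/
def cls (a b : A) : PairQ A := ((({(a, b)} : Multiset (A × A))) : (pairCon A).Quotient)

theorem cls_zero_left (y : A) : cls 0 y = 0 := (AddCon.eq _).2 (rel_zero y)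

theorem cls_one {a b a' b' : A} (p q r s : ℤ) (hdet : p * s - q * r = 1)
    (ha : a' = p • a + q • b) (hb : b' = r • a + s • b) : cls a b = cls a' b' :=
  (AddCon.eq _).2 (rel_one p q r s hdet ha hb)

theorem cls_rot (a b : A) : cls a b = cls b (-a) :=
  cls_one 0 1 (-1) 0 (by norm_num) (by simp) (by simp)

theorem cls_zero_right (y : A) : cls y 0 = 0 := by
  rw [cls_rot, cls_zero_left]

theorem cls_self (a : A) : cls a a = 0 := by
  rw [← cls_zero_right a]
  exact cls_one 1 0 (-1) 1 (by norm_num) (by simp) (by simp)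

theorem cls_add_left (a b c : A) : cls (a + c) b = cls a b + cls c b := by
  have h : cls a b + cls c b = cls (a + c) b + cls c 0 := (AddCon.eq _).2 (rel_add a b c)
  rw [h, cls_zero_right, add_zero]

theorem cls_add_right (a b c : A) : cls a (b + c) = cls a b + cls a c := by
  rw [cls_rot, cls_add_left, ← cls_rot, ← cls_rot]

theorem cls_surj_neg (x : PairQ A) : ∃ y : PairQ A, y + x = 0 := by
  induction x using AddCon.induction_on with
  | H m =>
    induction m using Multiset.induction_on with
    | empty => exact ⟨0, by simp⟩
    | cons p m ih =>
      obtain ⟨y, hy⟩ := ih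
      refine ⟨y + cls (-p.1) p.2, ?_⟩
      have : ((p ::ₘ m : Multiset (A × A)) : (pairCon A).Quotient) = cls p.1 p.2 + (m : (pairCon A).Quotient) := rfl
      rw [this, add_assoc, ← add_assoc (cls (-p.1) p.2), ← cls_add_left, neg_add_cancel,
        cls_zero_left, zero_add, hy]

noncomputable instance pairQNeg : Neg (PairQ A) := ⟨fun x => (cls_surj_neg x).choose⟩

noncomputable instance pairQGroup : AddCommGroup (PairQ A) :=
  { (inferInstance : AddCommMonoid (PairQ A)) with
    neg := Neg.neg
    zsmul := zsmulRec
    neg_add_cancel := fun x => (cls_surj_neg x).choose_spec }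

/-- The biadditive class map. -/
noncomputable def clsHom : A →+ A →+ PairQ A :=
  AddMonoidHom.mk' (fun u => AddMonoidHom.mk' (cls u) (cls_add_right u))
    (fun u v => by ext1 w; exact cls_add_left u w v)

theorem clsHom_apply (u v : A) : clsHom u v = cls u v := rfl

/-- The alternating class map. -/
noncomputable def clsAlt : A [⋀^Fin 2]→ₗ[ℤ] PairQ A where
  toFun v := clsHom (v 0) (v 1)
  map_update_add' := by
    intro _ m i x y
    fin_cases i <;> simp
  map_update_smul' := by
    intro _ m i c x
    fin_cases i <;> simp
  map_eq_zero_of_eq' := by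
    intro v i j h hij
    have : v 0 = v 1 := by
      fin_cases i <;> fin_cases j <;> simp_all
    show clsHom (v 0) (v 1) = 0
    rw [this]
    exact cls_self _

/-- The map out of the exterior square. -/
noncomputable def psi : ⋀[ℤ]^2 A →ₗ[ℤ] PairQ A := exteriorPower.alternatingMapLinearEquiv clsAlt

theorem psi_wedge (a b : A) : psi (wedge a b) = cls a b := by
  rw [wedge_eq, psi, exteriorPower.alternatingMapLinearEquiv_apply_ιMulti]
  rfl

theorem psi_sum {n : ℕ} (V : Fin n ⊕ Fin n → A) :
    psi (∑ j, wedge (V (Sum.inl j)) (V (Sum.inr j))) = ((pairs V : Multiset (A × A)) : (pairCon A).Quotient) := by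
  rw [map_sum]
  simp only [psi_wedge]
  have h : ∀ m : Multiset (A × A), (m.map fun p => cls p.1 p.2).sum = (m : (pairCon A).Quotient) := by
    intro m
    induction m using Multiset.induction_on with
    | empty => rfl
    | cons p m ih => 
      rw [Multiset.map_cons, Multiset.sum_cons, ih]
      rfl
  rw [← h, pairs, Multiset.map_map]
  rfl

theorem eqv_stab {n m : ℕ} (V : Fin n ⊕ Fin n → A) (W : Fin m ⊕ Fin m → A) (hV hW)
    (s : Multiset A) (h : pairs W = pairs V + s.map (fun y => ((0 : A), y))) :
    EqvGen LambdaMove (⟨n, V, hV⟩ : GenVec A) ⟨m, W, hW⟩ := by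
  induction s using Multiset.induction_on generalizing n with
  | empty => exact eqv_of_pairs_eq _ _ _ _ (by simpa using h.symm)
  | cons y s ih =>
    have hS : AddSubgroup.closure (Set.range (stabilize V y)) = ⊤ := by
      rw [genM_pairs, pairs_stabilize]
      exact ((genM_pairs V).1 hV).mono (Multiset.le_cons_self _ _)
    refine (EqvGen.rel _ _ (LambdaMove.lambda2 V hV y hS)).trans _ _ _ (ih _ hS ?_)
    rw [h, pairs_stabilize]
    simp

end LambdaAux

/-- Proposition 30: two generating colouring vectors are related by a finite sequence of
`Λ₁`- and `Λ₂`-moves (and their inverses) if and only if their wedge invariants in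
`⋀²_ℤ A` coincide. -/
theorem lambdaMove_eqvGen_iff_wedge_invariant_eq {A : Type*} [AddCommGroup A] [AddGroup.FG A]
    {g₁ g₂ : ℕ} (V₁ : Fin g₁ ⊕ Fin g₁ → A) (V₂ : Fin g₂ ⊕ Fin g₂ → A)
    (h₁ : AddSubgroup.closure (Set.range V₁) = ⊤)
    (h₂ : AddSubgroup.closure (Set.range V₂) = ⊤) :
    Relation.EqvGen LambdaMove ⟨g₁, V₁, h₁⟩ ⟨g₂, V₂, h₂⟩ ↔
      ∑ j : Fin g₁, wedge (V₁ (Sum.inl j)) (V₁ (Sum.inr j)) =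
        ∑ j : Fin g₂, wedge (V₂ (Sum.inl j)) (V₂ (Sum.inr j)) := by
  refine ⟨fun h => wedgeInv_eq_of_eqvGen h, fun h => ?_⟩
  have hcon : PairRel (pairs V₁) (pairs V₂) := by
    have := congrArg psi h
    rw [psi_sum, psi_sum] at this
    exact (AddCon.eq _).1 this
  obtain ⟨S, hS⟩ := AddGroup.FG.out (H := A)
  have hk : GenM (S.val.map fun y => ((0 : A), y)) := by
    unfold GenM
    rw [eq_top_iff, ← hS]
    apply AddSubgroup.closure_mono
    intro y hy
    exact ⟨(0, y), Multiset.mem_map_of_mem _ hy, Or.inr rfl⟩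
  obtain ⟨n, U, hU, hU'⟩ := exists_vec (pairs V₁) _ hk
  obtain ⟨m, W, hW, hW'⟩ := exists_vec (pairs V₂) _ hk
  exact (eqv_stab V₁ U h₁ hU _ hU').trans _ _ _ ((hcon _ hk _ _ U W hU hW hU' hW').trans _ _ _
    ((eqv_stab V₂ W h₂ hW _ hW').symm _ _))
end

section
/- Let A be an additive commutative group, t : A ≃+ A an automorphism, m a natural number, M an m × m integer matrix, c : Fin m → ℤ, V : Fin m → A, and x, y ∈ A. Let Ṽ : Fin (m+2) → A be V extended by x (in position m) and y (in position m+1). (a) Let M̃ be the (m+2) × (m+2) integer matrix that agrees with M on the first m rows and columns, has (M̃ i m) = c i and (M̃ i (m+1)) = 0 for i < m, has row m equal to (c₀, …, c_{m−1}, 0, −1), and has row m+1 identically zero. If the twisted Seifert equation holds for the extended data, i.e. ∑_j (M̃ i j) • t(Ṽ j) = ∑_j (M̃ j i) • Ṽ j for every i, then x = 0 and t y = ∑_i c i • (t (V i) − V i). (b) Similarly, let M̃' be the (m+2) × (m+2) integer matrix that agrees with Mᵀ on the first m rows and columns, has (M̃' i m) = c i and (M̃' i (m+1)) = 0 for i <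 m, has row m equal to (c₀, …, c_{m−1}, 0, 0), and has row m+1 equal to (0, …, 0, 1, 0). If ∑_j (M̃' i j) • t(Ṽ j) = ∑_j (M̃' j i) • Ṽ j for every i, then x = 0 and y = ∑_i c i • (t (V i) − V i). (This is the computation of Equation (23) in the proof of Proposition 13: under a Λ₂-move, the two new entries of the colouring vector are forced to be 0 and (t−1)/t · ∑ cᵢvᵢ, respectively 0 and (t−1) · ∑ cᵢvᵢ.) -/
/-- The computation of Equation (23): under a `Λ₂`-move, if the twisted Seifert equation holds
for the stabilized surface data, then the two new entries of the colouring vector are forced to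
be `0` and `(t−1)/t · ∑ cᵢvᵢ` (case (a)), respectively `0` and `(t−1) · ∑ cᵢvᵢ` (case (b)). -/
theorem lambda2_colouring_entries {A : Type*} [AddCommGroup A] (t : A ≃+ A)
    (m : ℕ) (M : Matrix (Fin m) (Fin m) ℤ) (c : Fin m → ℤ) (V : Fin m → A) (x y : A)
    (Vt : Fin (m + 2) → A)
    (hVt : ∀ j : Fin m, Vt (Fin.castAdd 2 j) = V j)
    (hVx : Vt ⟨m, by omega⟩ = x)
    (hVy : Vt ⟨m + 1, by omega⟩ = y)
    -- case (a): the matrix M̃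
    (Mt : Matrix (Fin (m + 2)) (Fin (m + 2)) ℤ)
    (hMt : ∀ i j : Fin m, Mt (Fin.castAdd 2 i) (Fin.castAdd 2 j) = M i j)
    (hMtc : ∀ i : Fin m, Mt (Fin.castAdd 2 i) ⟨m, by omega⟩ = c i)
    (hMt0 : ∀ i : Fin m, Mt (Fin.castAdd 2 i) ⟨m + 1, by omega⟩ = 0)
    (hMtrowm : (∀ j : Fin m, Mt ⟨m, by omega⟩ (Fin.castAdd 2 j) = c j) ∧
      Mt ⟨m, by omega⟩ ⟨m, by omega⟩ = 0 ∧ Mt ⟨m, by omega⟩ ⟨m + 1, by omega⟩ = -1)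
    (hMtrowlast : ∀ j : Fin (m + 2), Mt ⟨m + 1, by omega⟩ j = 0)
    -- case (b): the matrix M̃'
    (Mt' : Matrix (Fin (m + 2)) (Fin (m + 2)) ℤ)
    (hMt' : ∀ i j : Fin m, Mt' (Fin.castAdd 2 i) (Fin.castAdd 2 j) = M j i)
    (hMt'c : ∀ i : Fin m, Mt' (Fin.castAdd 2 i) ⟨m, by omega⟩ = c i)
    (hMt'0 : ∀ i : Fin m, Mt' (Fin.castAdd 2 i) ⟨m + 1, by omega⟩ = 0)
    (hMt'rowm : (∀ j : Fin m, Mt' ⟨m, by omega⟩ (Fin.castAdd 2 j) = c j) ∧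
      Mt' ⟨m, by omega⟩ ⟨m, by omega⟩ = 0 ∧ Mt' ⟨m, by omega⟩ ⟨m + 1, by omega⟩ = 0)
    (hMt'rowlast : (∀ j : Fin m, Mt' ⟨m + 1, by omega⟩ (Fin.castAdd 2 j) = 0) ∧
      Mt' ⟨m + 1, by omega⟩ ⟨m, by omega⟩ = 1 ∧ Mt' ⟨m + 1, by omega⟩ ⟨m + 1, by omega⟩ = 0) :
    ((∀ i : Fin (m + 2), ∑ j, Mt i j • t (Vt j) = ∑ j, Mt j i • Vt j) →
        x = 0 ∧ t y = ∑ i : Fin m, c i • (t (V i) - V i)) ∧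
    ((∀ i : Fin (m + 2), ∑ j, Mt' i j • t (Vt j) = ∑ j, Mt' j i • Vt j) →
        x = 0 ∧ y = ∑ i : Fin m, c i • (t (V i) - V i)) := by
  have key : ∀ f : Fin (m + 2) → A, ∑ j, f j =
      ∑ j : Fin m, f (Fin.castAdd 2 j) + f ⟨m, by omega⟩ + f ⟨m + 1, by omega⟩ := by
    intro f
    rw [Fin.sum_univ_castSucc, Fin.sum_univ_castSucc]
    rfl
  obtain ⟨a1, a2, a3⟩ := hMtrowm
  obtain ⟨b1, b2, b3⟩ := hMt'rowm
  obtain ⟨d1, d2, d3⟩ := hMt'rowlast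
  constructor
  · intro h
    have h1 := h ⟨m + 1, by omega⟩
    have h2 := h ⟨m, by omega⟩
    rw [key, key] at h1 h2
    simp only [hVt, hVx, hVy, hMtc, hMt0, a1, a2, a3, hMtrowlast, zero_smul, neg_smul, one_smul,
      Finset.sum_const_zero, add_zero, zero_add] at h1 h2
    refine ⟨neg_eq_zero.mp h1.symm, ?_⟩
    simp only [smul_sub, Finset.sum_sub_distrib]
    rw [← h2]
    abel
  · intro h
    have h1 := h ⟨m + 1, by omega⟩
    have h2 := h ⟨m, by omega⟩
    rw [key, key] at h1 h2
    simp only [hVt, hVx, hVy, hMt'c, hMt'0, b1, b2, b3, d1, d2, d3, zero_smul, one_smul,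
      Finset.sum_const_zero, add_zero, zero_add] at h1 h2
    refine ⟨by simpa using h1, ?_⟩
    simp only [smul_sub, Finset.sum_sub_distrib]
    rw [h2]
    abel
end
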